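/- arXiv:1902.09671 — 2 statements merged into one kernel-verified Lean document; each statement's English description precedes it below -/
import Mathlib

section
/- Let e, y : [0,∞) → ℝ^m be the input and output of a system that is output feedback passive with index ρ ∈ ℝ along the trajectory: there exists a differentiable nonnegative storage function V : [0,∞) → ℝ with V(0) = 0 and V′(t) ≤ ⟨e(t), y(t)⟩ − ρ‖y(t)‖² for all t ≥ 0. Then for every t > 0 such that ∫₀ᵗ ‖y(τ)‖² dτ > 0, the data-driven estimate ρ̄(t) = (∫₀ᵗ ⟨e(τ), y(τ)⟩ dτ)/(∫₀ᵗ ‖y(τ)‖² dτ) satisfies ρ̄(t) ≥ ρ; i.e., the estimate computed from any particular input-output trajectory is an over-estimate of the actual output feedback passivity index. -/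
open scoped RealInnerProductSpace

section

open Set intervalIntegral MeasureTheory

variable {a b ρ : ℝ} {V V' supply q : ℝ → ℝ}

theorem sub_le_integral_sub_mul_integral_of_hasDeriv_right_of_le
    (hab : a ≤ b) (hV : ContinuousOn V (Icc a b))
    (hV' : ∀ x ∈ Ioo a b, HasDerivWithinAt V (V' x) (Ioi x) x)
    (hsupply : IntervalIntegrable supply volume a b) (hq : IntervalIntegrable q volume a b)
    (hdiss : ∀ x ∈ Ioo a b, V' x ≤ supply x - ρ * q x) :
    V b - V a ≤ (∫ x in a..b, supply x) - ρ * ∫ x in a..b, q x := by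
  have hρq : IntervalIntegrable (fun x => ρ * q x) volume a b := hq.const_mul ρ
  calc
    -- `V'` need not be integrable: the one-sided fundamental theorem of calculus only asks for
    -- an integrable upper bound of it.
    V b - V a ≤ ∫ x in a..b, (supply x - ρ * q x) :=
      sub_le_integral_of_hasDeriv_right_of_le hab hV hV'
        ((intervalIntegrable_iff_integrableOn_Icc_of_le hab).1 (hsupply.sub hρq)) hdiss
    _ = (∫ x in a..b, supply x) - ρ * ∫ x in a..b, q x := by
      rw [integral_sub hsupply hρq, intervalIntegral.integral_const_mul]

-- Output feedback passivity is the case `supply = ⟪e, y⟫`, `q = ‖y‖²`; with `q = ‖e‖²` the same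
-- estimate concerns the input feedforward passivity index.
theorem OFP_estimate_overestimates_general
    (hab : a ≤ b) (hV : ContinuousOn V (Icc a b))
    (hV' : ∀ x ∈ Ioo a b, HasDerivWithinAt V (V' x) (Ioi x) x)
    (hsupply : IntervalIntegrable supply volume a b)
    (hdiss : ∀ x ∈ Ioo a b, V' x ≤ supply x - ρ * q x)
    (hVab : V a ≤ V b) (hq : 0 < ∫ x in a..b, q x) :
    ρ ≤ (∫ x in a..b, supply x) / ∫ x in a..b, q x := by
  have hq_int : IntervalIntegrable q volume a b := intervalIntegrable_of_integral_ne_zero hq.ne'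
  have hbalance : V b - V a ≤ (∫ x in a..b, supply x) - ρ * ∫ x in a..b, q x :=
    sub_le_integral_sub_mul_integral_of_hasDeriv_right_of_le hab hV hV' hsupply hq_int hdiss
  rw [le_div_iff₀ hq]
  exact sub_nonneg.1 ((sub_nonneg.2 hVab).trans hbalance)

end

/-- The data-driven estimate `ρ̄(t) = (∫₀ᵗ ⟪e, y⟫)/(∫₀ᵗ ‖y‖²)` computed from any
particular input-output trajectory of a system that is output feedback passive
with index `ρ` (with storage function starting at zero energy) over-estimates
the actual OFP index: `ρ̄(t) ≥ ρ`. -/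
theorem OFP_estimate_overestimates
    (m : ℕ) (ρ : ℝ)
    (e y : ℝ → EuclideanSpace ℝ (Fin m))
    (V V' : ℝ → ℝ)
    -- local integrability of the integrands
    (heyint : ∀ t : ℝ, IntervalIntegrable (fun τ => ⟪e τ, y τ⟫) MeasureTheory.volume 0 t)
    (hyint : ∀ t : ℝ, IntervalIntegrable (fun τ => ‖y τ‖ ^ 2) MeasureTheory.volume 0 t)
    -- nonnegative differentiable storage function with zero initial energy
    (hV0 : V 0 = 0)
    (hVnonneg : ∀ t : ℝ, 0 ≤ t → 0 ≤ V t)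
    (hVderiv : ∀ t : ℝ, 0 ≤ t → HasDerivAt V (V' t) t)
    -- OFP dissipation inequality along the trajectory
    (hdiss : ∀ t : ℝ, 0 ≤ t → V' t ≤ ⟪e t, y t⟫ - ρ * ‖y t‖ ^ 2) :
    ∀ t : ℝ, 0 < t → 0 < (∫ τ in (0 : ℝ)..t, ‖y τ‖ ^ 2) →
      ρ ≤ (∫ τ in (0 : ℝ)..t, ⟪e τ, y τ⟫) / (∫ τ in (0 : ℝ)..t, ‖y τ‖ ^ 2) := by
  intro t ht hy
  exact OFP_estimate_overestimates_general ht.le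
    (HasDerivAt.continuousOn fun x hx => hVderiv x hx.1)
    (fun x hx => (hVderiv x hx.1.le).hasDerivWithinAt) (heyint t) (fun x hx => hdiss x hx.1.le)
    (hV0.trans_le (hVnonneg t ht.le)) hy
end

section
/- Let e, y : [0,∞) → ℝ^m be the input and output of a system that is input feed-forward passive with index ν ∈ ℝ along the trajectory: there exists a differentiable nonnegative storage function V : [0,∞) → ℝ with V(0) = 0 and V′(t) ≤ ⟨e(t), y(t)⟩ − ν‖e(t)‖² for all t ≥ 0. Then for every t > 0 such that ∫₀ᵗ ‖e(τ)‖² dτ > 0, the data-driven estimate ν̄(t) = (∫₀ᵗ ⟨e(τ), y(τ)⟩ dτ)/(∫₀ᵗ ‖e(τ)‖² dτ) satisfies ν̄(t) ≥ ν; i.e., the estimate computed from any particular input-output trajectory is an over-estimate of the actual input feed-forward passivity index. -/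
open scoped RealInnerProductSpace

section FeedforwardPassivity

open Set MeasureTheory

variable {E : Type*} [NormedAddCommGroup E] [InnerProductSpace ℝ E]
  {e y : ℝ → E} {V V' : ℝ → ℝ} {ν a b : ℝ}

theorem storage_sub_le_integral_inner_sub_mul_integral_norm_sq (hab : a ≤ b)
    (hey : IntervalIntegrable (fun τ => ⟪e τ, y τ⟫) volume a b)
    (he : IntervalIntegrable (fun τ => ‖e τ‖ ^ 2) volume a b)
    (hVcont : ContinuousOn V (Icc a b))
    (hVderiv : ∀ τ ∈ Ioo a b, HasDerivWithinAt V (V' τ) (Ioi τ) τ)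
    (hdiss : ∀ τ ∈ Ioo a b, V' τ ≤ ⟪e τ, y τ⟫ - ν * ‖e τ‖ ^ 2) :
    V b - V a ≤ (∫ τ in a..b, ⟪e τ, y τ⟫) - ν * ∫ τ in a..b, ‖e τ‖ ^ 2 := by
  have hsupply : IntegrableOn (fun τ => ⟪e τ, y τ⟫ - ν * ‖e τ‖ ^ 2) (Icc a b) :=
    (intervalIntegrable_iff_integrableOn_Icc_of_le hab).1 (hey.sub (he.const_mul ν))
  calc
    V b - V a ≤ ∫ τ in a..b, (⟪e τ, y τ⟫ - ν * ‖e τ‖ ^ 2) :=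
      -- One-sided fundamental theorem of calculus: `V'` itself may fail to be integrable.
      intervalIntegral.sub_le_integral_of_hasDeriv_right_of_le hab hVcont hVderiv hsupply hdiss
    _ = (∫ τ in a..b, ⟪e τ, y τ⟫) - ν * ∫ τ in a..b, ‖e τ‖ ^ 2 := by
      rw [intervalIntegral.integral_sub hey (he.const_mul ν), intervalIntegral.integral_const_mul]

theorem IFP_estimate_overestimates_general (hab : a ≤ b)
    (hey : IntervalIntegrable (fun τ => ⟪e τ, y τ⟫) volume a b)
    (hV : V a ≤ V b) (hVcont : ContinuousOn V (Icc a b))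
    (hVderiv : ∀ τ ∈ Ioo a b, HasDerivWithinAt V (V' τ) (Ioi τ) τ)
    (hdiss : ∀ τ ∈ Ioo a b, V' τ ≤ ⟪e τ, y τ⟫ - ν * ‖e τ‖ ^ 2)
    (hpos : 0 < ∫ τ in a..b, ‖e τ‖ ^ 2) :
    ν ≤ (∫ τ in a..b, ⟪e τ, y τ⟫) / ∫ τ in a..b, ‖e τ‖ ^ 2 := by
  have he : IntervalIntegrable (fun τ => ‖e τ‖ ^ 2) volume a b :=
    intervalIntegral.intervalIntegrable_of_integral_ne_zero hpos.ne'
  have hbalance :=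
    storage_sub_le_integral_inner_sub_mul_integral_norm_sq hab hey he hVcont hVderiv hdiss
  rw [le_div_iff₀ hpos]
  linarith

end FeedforwardPassivity

/-- The data-driven estimate `ν̄(t) = (∫₀ᵗ ⟪e, y⟫)/(∫₀ᵗ ‖e‖²)` computed from any
particular input-output trajectory of a system that is input feed-forward
passive with index `ν` (with storage function starting at zero energy)
over-estimates the actual IFP index: `ν̄(t) ≥ ν`. -/
theorem IFP_estimate_overestimates
    (m : ℕ) (ν : ℝ)
    (e y : ℝ → EuclideanSpace ℝ (Fin m))
    (V V' : ℝ → ℝ)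
    -- local integrability of the integrands
    (heyint : ∀ t : ℝ, IntervalIntegrable (fun τ => ⟪e τ, y τ⟫) MeasureTheory.volume 0 t)
    (heint : ∀ t : ℝ, IntervalIntegrable (fun τ => ‖e τ‖ ^ 2) MeasureTheory.volume 0 t)
    -- nonnegative differentiable storage function with zero initial energy
    (hV0 : V 0 = 0)
    (hVnonneg : ∀ t : ℝ, 0 ≤ t → 0 ≤ V t)
    (hVderiv : ∀ t : ℝ, 0 ≤ t → HasDerivAt V (V' t) t)
    -- IFP dissipation inequality along the trajectory
    (hdiss : ∀ t : ℝ, 0 ≤ t → V' t ≤ ⟪e t, y t⟫ - ν * ‖e t‖ ^ 2) :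
    ∀ t : ℝ, 0 < t → 0 < (∫ τ in (0 : ℝ)..t, ‖e τ‖ ^ 2) →
      ν ≤ (∫ τ in (0 : ℝ)..t, ⟪e τ, y τ⟫) / (∫ τ in (0 : ℝ)..t, ‖e τ‖ ^ 2) := by
  intro t ht hpos
  exact IFP_estimate_overestimates_general ht.le (heyint t) (hV0.trans_le (hVnonneg t ht.le))
    (fun τ hτ => (hVderiv τ hτ.1).continuousAt.continuousWithinAt)
    (fun τ hτ => (hVderiv τ hτ.1.le).hasDerivWithinAt) (fun τ hτ => hdiss τ hτ.1.le) hpos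
end
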